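/- Let q be an odd positive integer and k, m integers with gcd(k,q) = 1. Then S(q;k,m) = e(−\overline{4k}·m²/q)·(k/q)·S(q;1,0), where \overline{4k} is the inverse of 4k modulo q and (k/q) is the Jacobi symbol. -/

import Mathlib

noncomputable def e (t : ℝ) : ℂ := Complex.exp (2 * Real.pi * Complex.I * t)

noncomputable def gaussS (q : ℕ) (k m : ℤ) : ℂ :=
  ∑ α ∈ Finset.range q, e (((k * (α : ℤ)^2 + m * (α : ℤ) : ℤ) : ℝ) / q)

noncomputable def eQ (q : ℕ) (n : ℤ) : ℂ := e ((n : ℝ) / q)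

lemma eQ_add (q : ℕ) (a b : ℤ) : eQ q (a + b) = eQ q a * eQ q b := by
  unfold eQ e
  rw [← Complex.exp_add]
  congr 1
  push_cast
  ring

lemma eQ_std (q : ℕ) [NeZero q] (n : ℤ) : eQ q n = ZMod.stdAddChar (n : ZMod q) := by
  rw [ZMod.stdAddChar_coe]
  unfold eQ e
  congr 1
  push_cast
  ring

lemma eQ_congr (q : ℕ) [NeZero q] (a b : ℤ) (h : (a : ZMod q) = b) : eQ q a = eQ q b := by
  rw [eQ_std, eQ_std, h]

lemma eQ_scale (q c : ℕ) (hc : c ≠ 0) (n : ℤ) : eQ (c * q) (c * n) = eQ q n := by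
  unfold eQ
  congr 1
  push_cast
  rw [mul_div_mul_left]
  exact_mod_cast hc

lemma sum_reindex (q : ℕ) [NeZero q] (F : ℤ → ℂ)
    (hF : ∀ a b : ℤ, (a : ZMod q) = b → F a = F b)
    {ι : Type} [Fintype ι] (g : ι → ℤ) (hcard : Fintype.card ι = q)
    (hg : ∀ i j, (g i : ZMod q) = g j → i = j) :
    ∑ α ∈ Finset.range q, F (α : ℤ) = ∑ i, F (g i) := by
  have key : ∀ {κ : Type} [Fintype κ] (g : κ → ℤ) (_ : Fintype.card κ = q)
      (_ : ∀ i j, (g i : ZMod q) = g j → i = j),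
      ∑ i, F (g i) = ∑ z : ZMod q, F (z.val : ℤ) := by
    intro κ _ g hc hg
    apply Fintype.sum_bijective (fun i => (g i : ZMod q))
    · rw [Fintype.bijective_iff_injective_and_card]
      exact ⟨fun i j h => hg i j h, by rw [hc, ZMod.card]⟩
    · intro i
      apply hF
      simp
  rw [key g hcard hg, Finset.sum_range, key (fun i : Fin q => ((i : ℕ) : ℤ)) (by simp)]
  intro i j h
  simp only [Int.cast_natCast] at h
  rw [ZMod.natCast_eq_natCast_iff'] at h
  rw [Nat.mod_eq_of_lt i.2, Nat.mod_eq_of_lt j.2] at h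
  exact Fin.ext h

lemma gaussS_eq (q : ℕ) (k m : ℤ) :
    gaussS q k m = ∑ α ∈ Finset.range q, eQ q (k * (α : ℤ)^2 + m * (α : ℤ)) := rfl

lemma gaussS_zero (q : ℕ) (k : ℤ) :
    gaussS q k 0 = ∑ α ∈ Finset.range q, eQ q (k * (α : ℤ)^2) := by
  rw [gaussS_eq]; simp

lemma gaussS_reindex (q : ℕ) [NeZero q] (k : ℤ)
    {ι : Type} [Fintype ι] (g : ι → ℤ) (hcard : Fintype.card ι = q)
    (hg : ∀ i j, (g i : ZMod q) = g j → i = j) :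
    gaussS q k 0 = ∑ i, eQ q (k * (g i)^2) := by
  rw [gaussS_zero]
  refine sum_reindex q (fun n => eQ q (k * n^2)) ?_ g hcard hg
  intro a b h
  apply eQ_congr
  push_cast
  rw [h]

lemma complete_square (q : ℕ) [NeZero q] (k m b : ℤ) (hb : (4 * k * b : ZMod q) = 1) :
    gaussS q k m = eQ q (-b * m^2) * gaussS q k 0 := by
  rw [gaussS_reindex q k (fun i : Fin q => ((i : ℕ) : ℤ) + 2 * b * m) (by simp), gaussS_eq,
    Finset.sum_range, Finset.mul_sum]
  · refine Finset.sum_congr rfl fun i _ => ?_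
    rw [← eQ_add]
    apply eQ_congr
    push_cast
    linear_combination (-(m : ZMod q) * i - b * m^2) * hb
  · intro i j h
    push_cast at h
    have h := add_right_cancel h
    rw [ZMod.natCast_eq_natCast_iff'] at h
    rw [Nat.mod_eq_of_lt i.2, Nat.mod_eq_of_lt j.2] at h
    exact Fin.ext h

lemma gaussS_mul (a b : ℕ) [NeZero a] [NeZero b] (hab : Nat.Coprime a b) (k : ℤ) :
    gaussS (a * b) k 0 = gaussS a (k * b) 0 * gaussS b (k * a) 0 := by
  have ha : a ≠ 0 := NeZero.ne a
  have hb : b ≠ 0 := NeZero.ne b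
  rw [gaussS_reindex (a * b) k
    (fun i : Fin a × Fin b => ((i.1 : ℕ) : ℤ) * b + ((i.2 : ℕ) : ℤ) * a) (by simp)]
  · rw [gaussS_zero, gaussS_zero, Finset.sum_range, Finset.sum_range, Finset.sum_mul_sum,
      Fintype.sum_prod_type]
    refine Finset.sum_congr rfl fun i _ => Finset.sum_congr rfl fun j _ => ?_
    rw [← eQ_scale a b hb, ← eQ_scale b a ha, mul_comm b a, ← eQ_add]
    apply eQ_congr
    have h0 : (a : ZMod (a * b)) * b = 0 := by
      rw [← Nat.cast_mul, ZMod.natCast_self]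
    push_cast
    linear_combination (2 * k * i * j : ZMod (a * b)) * h0
  · rintro ⟨i, j⟩ ⟨i', j'⟩ h
    have h : (((i * b + j * a : ℕ)) : ZMod (a * b)) = ((i' * b + j' * a : ℕ)) := by
      push_cast at h ⊢; exact h
    rw [ZMod.natCast_eq_natCast_iff] at h
    have h1 : (i : ℕ) * b ≡ i' * b [MOD a] := by
      have := h.of_mul_right b
      simpa [Nat.ModEq] using this
    have h2 : (j : ℕ) * a ≡ j' * a [MOD b] := by
      have := h.of_mul_left a
      simpa [Nat.ModEq] using this
    have h1 := Nat.ModEq.cancel_right_of_coprime hab h1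
    have h2 := Nat.ModEq.cancel_right_of_coprime hab.symm h2
    have h1 := Nat.ModEq.eq_of_lt_of_lt h1 i.2 i'.2
    have h2 := Nat.ModEq.eq_of_lt_of_lt h2 j.2 j'.2
    exact Prod.ext (Fin.ext h1) (Fin.ext h2)

lemma sum_eQ (p : ℕ) [NeZero p] (t : ℤ) :
    ∑ y : Fin p, eQ p (t * ((y : ℕ) : ℤ)) = if (t : ZMod p) = 0 then (p : ℂ) else 0 := by
  rw [← Finset.sum_range (fun y => eQ p (t * (y : ℤ)))]
  rw [sum_reindex p (fun y => eQ p (t * y)) ?_ (fun z : ZMod p => (z.val : ℤ)) (ZMod.card p)]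
  · have := AddChar.sum_mulShift (t : ZMod p) (ZMod.isPrimitive_stdAddChar p)
    rw [ZMod.card] at this
    simp only [Nat.cast_ite, Nat.cast_zero] at this
    rw [← this]
    refine Finset.sum_congr rfl fun z _ => ?_
    rw [eQ_std]
    push_cast
    rw [ZMod.natCast_zmod_val, mul_comm]
  · intro i j h
    simpa using h
  · intro a b h
    apply eQ_congr
    push_cast
    rw [h]

lemma gaussS_sq (p n : ℕ) [NeZero p] [NeZero n] (k : ℤ) (hk : IsUnit ((2 * k : ℤ) : ZMod p)) :
    gaussS (p * p * n) k 0 = p * gaussS n k 0 := by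
  have hp : p ≠ 0 := NeZero.ne p
  have hp0 : 0 < p := Nat.pos_of_ne_zero hp
  have hn : n ≠ 0 := NeZero.ne n
  rw [gaussS_reindex (p * p * n) k
    (fun i : Fin n × Fin p × Fin p =>
      ((p * i.1 + i.2.1 + p * n * i.2.2 : ℕ) : ℤ)) (by simp; ring)]
  · rw [gaussS_zero, Finset.sum_range, Fintype.sum_prod_type, Finset.mul_sum]
    refine Finset.sum_congr rfl fun z _ => ?_
    rw [Fintype.sum_prod_type]
    have h0 : (p : ZMod (p * p * n)) * p * n = 0 := by
      rw [← Nat.cast_mul, ← Nat.cast_mul, ZMod.natCast_self]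
    have hw : ∀ w : Fin p, ∑ y : Fin p,
        eQ (p * p * n) (k * ((p * z + w + p * n * y : ℕ) : ℤ)^2) =
        if w = ⟨0, hp0⟩ then p * eQ n (k * ((z : ℕ) : ℤ)^2) else 0 := by
      intro w
      have : ∀ y : Fin p, eQ (p * p * n) (k * ((p * z + w + p * n * y : ℕ) : ℤ)^2)
          = eQ (p * p * n) (k * ((p * z + w : ℕ) : ℤ)^2) *
            eQ p ((2 * k * ((w : ℕ) : ℤ)) * ((y : ℕ) : ℤ)) := by
        intro y
        rw [← eQ_scale p (p * n) (mul_ne_zero hp hn), show p * n * p = p * p * n by ring, ← eQ_add]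
        apply eQ_congr
        push_cast
        linear_combination (2 * k * z * y + k * n * y^2 : ZMod (p * p * n)) * h0
      simp_rw [this]
      rw [← Finset.mul_sum, sum_eQ]
      have hiff : (((2 * k * ((w : ℕ) : ℤ) : ℤ)) : ZMod p) = 0 ↔ w = ⟨0, hp0⟩ := by
        rw [Int.cast_mul, hk.mul_right_eq_zero, Int.cast_natCast, ZMod.natCast_eq_zero_iff, Fin.ext_iff]
        constructor
        · intro h
          exact Nat.eq_zero_of_dvd_of_lt h w.2
        · intro h
          simp only at h
          rw [h]; exact dvd_zero _
      by_cases h : w = ⟨0, hp0⟩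
      · rw [if_pos (hiff.2 h), if_pos h, mul_comm, h]
        congr 1
        rw [← eQ_scale n (p * p) (mul_ne_zero hp hp)]
        congr 1
        push_cast
        ring
      · rw [if_neg (fun h' => h (hiff.1 h')), if_neg h, mul_zero]
    simp only [hw]
    rw [Finset.sum_ite_eq' Finset.univ, if_pos (Finset.mem_univ _)]
  · rintro ⟨z, w, y⟩ ⟨z', w', y'⟩ h
    simp only [Int.cast_natCast] at h
    rw [ZMod.natCast_eq_natCast_iff] at h
    have hlt : ∀ (z : Fin n) (w y : Fin p), p * z + w + p * n * y < p * p * n := by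
      intro z w y
      have h1 : p * z.1 + p ≤ p * n := by
        have := Nat.mul_le_mul_left p z.2
        simpa [Nat.mul_succ] using this
      have h2 : p * n * y.1 + p * n ≤ p * n * p := by
        have := Nat.mul_le_mul_left (p * n) y.2
        simpa [Nat.mul_succ] using this
      have h3 := w.2
      have h4 : p * p * n = p * n * p := by ring
      omega
    have h := Nat.ModEq.eq_of_lt_of_lt h (hlt z w y) (hlt z' w' y')
    have e1 : ∀ (z : Fin n) (w y : Fin p), p * z.1 + w.1 + p * n * y.1 = w.1 + p * (z.1 + n * y.1) := by
      intros; ring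
    rw [e1, e1] at h
    have hw : w.1 = w'.1 := by
      have := congrArg (· % p) h
      simpa [Nat.add_mul_mod_self_left, Nat.mod_eq_of_lt] using this
    rw [hw] at h
    have h := Nat.eq_of_mul_eq_mul_left hp0 (Nat.add_left_cancel h)
    have hz : z.1 = z'.1 := by
      have := congrArg (· % n) h
      simpa [Nat.add_mul_mod_self_left, Nat.mod_eq_of_lt] using this
    rw [hz] at h
    have h := Nat.eq_of_mul_eq_mul_left (Nat.pos_of_ne_zero hn) (Nat.add_left_cancel h)
    exact Prod.ext (Fin.ext hz) (Prod.ext (Fin.ext hw) (Fin.ext h))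

lemma gaussS_prime_aux (p : ℕ) [Fact p.Prime] (hp2 : p ≠ 2) (k : ℤ) (hk : (k : ZMod p) ≠ 0) :
    gaussS p k 0 = (jacobiSym k p : ℂ) *
      gaussSum ((quadraticChar (ZMod p)).ringHomComp (Int.castRingHom ℂ)) ZMod.stdAddChar := by
  have hchar : ringChar (ZMod p) ≠ 2 := by rwa [ZMod.ringChar_zmod_n]
  set χ := (quadraticChar (ZMod p)).ringHomComp (Int.castRingHom ℂ) with hχ
  have h1 : gaussS p k 0 = ∑ x : ZMod p, ZMod.stdAddChar ((k : ZMod p) * x^2) := by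
    rw [gaussS_reindex p k (fun z : ZMod p => (z.val : ℤ)) (ZMod.card p)]
    · refine Finset.sum_congr rfl fun z _ => ?_
      rw [eQ_std]
      push_cast
      rw [ZMod.natCast_zmod_val]
    · intro i j h
      simpa using h
  have h2 : ∑ x : ZMod p, (ZMod.stdAddChar ((k : ZMod p) * x^2) : ℂ) =
      ∑ a : ZMod p, (χ a + 1) * ZMod.stdAddChar ((k : ZMod p) * a) := by
    rw [← Finset.sum_fiberwise (s := Finset.univ) (g := fun x : ZMod p => x^2)]
    refine Finset.sum_congr rfl fun a _ => ?_
    have hc := quadraticChar_card_sqrts hchar a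
    have hc' : (((Finset.univ.filter fun x : ZMod p => x^2 = a).card : ℤ) : ℂ) = χ a + 1 := by
      rw [show χ a + 1 = (((quadraticChar (ZMod p) a + 1 : ℤ)) : ℂ) by simp [hχ], ← hc]
      congr 3
      ext x; simp
    rw [Finset.sum_congr rfl (g := fun _ => ZMod.stdAddChar ((k : ZMod p) * a))]
    · rw [Finset.sum_const, nsmul_eq_mul, ← hc']
      simp
    · intro x hx
      rw [(Finset.mem_filter.1 hx).2]
  have h3 : ∑ a : ZMod p, (ZMod.stdAddChar ((k : ZMod p) * a) : ℂ) = 0 := by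
    have := AddChar.sum_mulShift (k : ZMod p) (ZMod.isPrimitive_stdAddChar p)
    rw [if_neg hk] at this
    simpa [mul_comm] using this
  have h4 := gaussSum_mulShift χ (ZMod.stdAddChar (N := p)) (Units.mk0 (k : ZMod p) hk)
  have h5 : (χ k) = (jacobiSym k p : ℂ) := by
    rw [← jacobiSym.legendreSym.to_jacobiSym]
    simp [hχ, legendreSym]
  have h6 : (jacobiSym k p : ℂ) * jacobiSym k p = 1 := by
    have : legendreSym p k ^ 2 = 1 := legendreSym.sq_one p hk
    rw [← jacobiSym.legendreSym.to_jacobiSym]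
    rw [← sq]; exact_mod_cast this
  rw [h1, h2]
  simp_rw [add_mul, one_mul]
  rw [Finset.sum_add_distrib, h3, add_zero, ← h4]
  simp only [Units.val_mk0]
  rw [h5, ← mul_assoc, h6, one_mul]
  simp [gaussSum, AddChar.mulShift_apply]

lemma gaussS_prime (p : ℕ) [Fact p.Prime] (hp2 : p ≠ 2) (k : ℤ) (hk : (k : ZMod p) ≠ 0) :
    gaussS p k 0 = (jacobiSym k p : ℂ) * gaussS p 1 0 := by
  rw [gaussS_prime_aux p hp2 k hk, gaussS_prime_aux p hp2 1 (by simp)]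
  simp

lemma cast_ne_zero_of_gcd (p : ℕ) (hp : p.Prime) (k : ℤ) (hk : Int.gcd k p = 1) :
    (k : ZMod p) ≠ 0 := by
  intro h
  rw [ZMod.intCast_zmod_eq_zero_iff_dvd] at h
  have : (p : ℤ) ∣ (Int.gcd k p : ℤ) := Int.dvd_coe_gcd h dvd_rfl
  rw [hk] at this
  have := Int.natCast_dvd_natCast.1 this
  exact hp.one_lt.ne' (Nat.dvd_one.1 this)

lemma gaussS_main (q : ℕ) : ∀ (_ : 0 < q) (_ : Odd q) (k : ℤ) (_ : Int.gcd k q = 1),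
    gaussS q k 0 = (jacobiSym k q : ℂ) * gaussS q 1 0 := by
  induction q using Nat.strong_induction_on with
  | _ q ih =>
  intro hq hodd k hk
  by_cases h1 : q = 1
  · subst h1
    simp [gaussS, e]
  obtain ⟨p, hp, n, rfl⟩ := Nat.exists_prime_and_dvd h1
  have : Fact p.Prime := ⟨hp⟩
  have hpodd : Odd p := (Nat.odd_mul.1 hodd).1
  have hnodd : Odd n := (Nat.odd_mul.1 hodd).2
  have hp2 : p ≠ 2 := by rintro rfl; exact absurd hpodd (by decide)
  have hn0 : 0 < n := Nat.pos_of_ne_zero (by rintro rfl; simp at hq)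
  have hcop : IsCoprime k ((p : ℤ) * n) := by
    rw [Int.isCoprime_iff_gcd_eq_one]; exact_mod_cast hk
  have hkp : IsCoprime k p := hcop.of_mul_right_left
  have hkn : IsCoprime k n := hcop.of_mul_right_right
  have : NeZero n := ⟨hn0.ne'⟩
  have hlt : n < p * n := lt_mul_of_one_lt_left hn0 hp.one_lt
  by_cases hd : p ∣ n
  · obtain ⟨r, rfl⟩ := hd
    have hr0 : 0 < r := Nat.pos_of_ne_zero (by rintro rfl; simp at hq)
    have : NeZero r := ⟨hr0.ne'⟩
    have hunit : ∀ k : ℤ, IsCoprime k p → IsUnit ((2 * k : ℤ) : ZMod p) := by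
      intro k hk
      rw [isUnit_iff_ne_zero]
      apply cast_ne_zero_of_gcd p hp
      rw [← Int.isCoprime_iff_gcd_eq_one]
      refine IsCoprime.mul_left ?_ hk
      have : Nat.Coprime 2 p := (Nat.coprime_primes Nat.prime_two hp).2 hp2.symm
      exact_mod_cast this.isCoprime
    have hkr : IsCoprime k r := by
      push_cast at hkn
      exact hkn.of_mul_right_right
    have hrlt : r < p * (p * r) := lt_of_le_of_lt (Nat.le_mul_of_pos_left r hp.pos) hlt
    have IH := ih r hrlt hr0 (Nat.odd_mul.1 hnodd).2 k (Int.isCoprime_iff_gcd_eq_one.1 hkr)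
    have hJ : jacobiSym k (p * (p * r)) = jacobiSym k r := by
      rw [jacobiSym.mul_right' k hp.ne_zero hn0.ne', jacobiSym.mul_right' k hp.ne_zero hr0.ne',
        ← mul_assoc, ← sq, jacobiSym.sq_one (Int.isCoprime_iff_gcd_eq_one.1 hkp), one_mul]
    rw [hJ, ← mul_assoc p p r, gaussS_sq p r k (hunit k hkp), gaussS_sq p r 1 (hunit 1 isCoprime_one_left),
      IH]
    ring
  · have hpn : Nat.Coprime p n := (Nat.Prime.coprime_iff_not_dvd hp).2 hd
    have hpn' : IsCoprime (p : ℤ) n := hpn.isCoprime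
    have P : ∀ k : ℤ, IsCoprime k p → gaussS p k 0 = (jacobiSym k p : ℂ) * gaussS p 1 0 :=
      fun k hk => gaussS_prime p hp2 k
        (cast_ne_zero_of_gcd p hp k (Int.isCoprime_iff_gcd_eq_one.1 hk))
    have N : ∀ k : ℤ, IsCoprime k n → gaussS n k 0 = (jacobiSym k n : ℂ) * gaussS n 1 0 :=
      fun k hk => ih n hlt hn0 hnodd k (Int.isCoprime_iff_gcd_eq_one.1 hk)
    rw [gaussS_mul p n hpn k, gaussS_mul p n hpn 1, one_mul, one_mul,
      P _ (hkp.mul_left hpn'.symm), N _ (hkn.mul_left hpn'), P _ hpn'.symm, N _ hpn',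
      jacobiSym.mul_right' k hp.ne_zero hn0.ne', jacobiSym.mul_left, jacobiSym.mul_left]
    push_cast
    ring

theorem gaussS_odd_eval (q : ℕ) (hq : 0 < q) (hodd : Odd q) (k m : ℤ)
    (hk : Int.gcd k q = 1) (b : ℤ) (hb : (4 * k * b) % q = 1 % q) :
    gaussS q k m = e (((-b * m^2 : ℤ) : ℝ) / q) * (jacobiSym k q : ℂ) * gaussS q 1 0 := by
  have : NeZero q := ⟨hq.ne'⟩
  have hb' : (4 * k * b : ZMod q) = 1 := by
    have := (ZMod.intCast_eq_intCast_iff' (4 * k * b) 1 q).2 hb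
    push_cast at this
    exact this
  rw [complete_square q k m b hb', gaussS_main q hq hodd k hk, ← mul_assoc]
  rfl
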